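/- Define q : ℝ¹⁰ → ℝ⁵ by q(x) = (2x₁x₂ − x₇² − x₈² + x₉² + x₁₀², √2x₅x₇ − √2x₅x₉ + √2x₆x₈ − √2x₆x₁₀ − 2x₂x₄, −√2x₅x₈ − √2x₅x₁₀ + √2x₆x₇ + √2x₆x₉ + 2x₂x₃, −√2x₃x₇ + √2x₃x₉ + √2x₄x₈ + √2x₄x₁₀ − 2x₁x₆, −√2x₃x₈ + √2x₃x₁₀ − √2x₄x₇ − √2x₄x₉ + 2x₁x₅), F(x) = 2|q(x)|² − |x|⁴, M = {x ∈ ℝ¹⁰ : |x|² = 1, F(x) = 0}, and the complex-valued functions on M: ζ(x) = x₉ + i x₁₀; κ(x) = √2x₅x₇ − √2x₅x₉ + √2x₆x₈ − √2x₆x₁₀ − 2x₂x₄ + i(−√2x₅x₈ − √2x₅x₁₀ + √2x₆x₇ + √2x₆x₉ + 2x₂x₃); σ(x) = −x₃² + x₄² − 2x₇x₉ − 2x₈x₁₀ + i(−2x₃x₄ − 2x₇x₁₀ + 2x₈x₉); ν(x) = (1/4)(∂F/∂x₉ + i ∂F/∂x₁₀)(x); ρ(x) = (1/4)(x₉ +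 i x₁₀)(∂F/∂x₃ + i ∂F/∂x₄)(x) − (1/4)(∂F/∂x₉ + i ∂F/∂x₁₀)(x)(x₃ + i x₄). For integers k, ℓ ≥ 0, consider the family of functions M → ℂ given by 𝒰 = { κ^{k−2i} σ^i ζ^{ℓ−j} ν^j : 0 ≤ i ≤ ⌊k/2⌋, 0 ≤ j ≤ ℓ } together with 𝒱 = { ρ κ^{k−1−2i} σ^i ζ^{ℓ−1−j} ν^j : 0 ≤ i ≤ ⌊(k−1)/2⌋, 0 ≤ j ≤ ℓ−1 }. Then 𝒰 ∪ 𝒱 is linearly independent over ℂ in the space of functions M → ℂ, and the dimension of its ℂ-linear span equals ℓ(k+1) + ⌊k/2⌋ + 1. -/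

import Mathlib

/-!
All the functions involved have a parity under `x ↦ -x`, which preserves `M`: `κ`, `σ`, `ρ` are
even while `ζ`, `ν` are odd. Hence the `𝒰`-part and the `𝒱`-part of a vanishing linear
combination have opposite parity in `ζ`, `ν`, and each vanishes separately.

To treat one part, restrict to the points `(a, b, c, 0, 0, 0, 0, 0, e, 0)` of `M`. Put
`d = a - b`. On `|x| = 1` the equation `F = 0` becomes `y² + 4 b d y = (1 - d²)² - 1/2` with
`y = c²`, and on such points `σ = κ² · 1 / (4 b²)` and `ν = ζ · (1 - 2 d²)`. For all small positive
`b`, `d` the equation has a solution with `κ`, `ζ`, `ρ` all nonzero (`exists_point`). So each part is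
a nonzero factor times a polynomial in the two quantities `1 / (4 b²)` and `1 - 2 d²`, which vary
independently over infinite sets; the polynomial vanishes identically (`coeff_eq_zero₂`).
The dimension is then the number of indices.
-/

open Real

/-- The quadratic map `q : ℝ¹⁰ → ℝ⁵` (coordinates `x₁,…,x₁₀` of the statement
are `x 0, …, x 9` here). -/
noncomputable def qMap (x : Fin 10 → ℝ) : Fin 5 → ℝ :=
  ![2 * x 0 * x 1 - x 6 ^ 2 - x 7 ^ 2 + x 8 ^ 2 + x 9 ^ 2,
    √2 * x 4 * x 6 - √2 * x 4 * x 8 + √2 * x 5 * x 7 - √2 * x 5 * x 9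
      - 2 * x 1 * x 3,
    -(√2) * x 4 * x 7 - √2 * x 4 * x 9 + √2 * x 5 * x 6 + √2 * x 5 * x 8
      + 2 * x 1 * x 2,
    -(√2) * x 2 * x 6 + √2 * x 2 * x 8 + √2 * x 3 * x 7 + √2 * x 3 * x 9
      - 2 * x 0 * x 5,
    -(√2) * x 2 * x 7 + √2 * x 2 * x 9 - √2 * x 3 * x 6 - √2 * x 3 * x 8
      + 2 * x 0 * x 4]

/-- The Cartan–Münzner polynomial `F(x) = 2|q(x)|² - |x|⁴`. -/
noncomputable def FCM (x : Fin 10 → ℝ) : ℝ :=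
  2 * (∑ i, qMap x i ^ 2) - (∑ i, x i ^ 2) ^ 2

/-- The partial derivative `∂F/∂x_{j+1}` of the polynomial function `F`. -/
noncomputable def pdF (j : Fin 10) (x : Fin 10 → ℝ) : ℝ :=
  fderiv ℝ FCM x (Pi.single j 1)

/-- `ζ(x) = x₉ + i x₁₀`. -/
noncomputable def zetaF (x : Fin 10 → ℝ) : ℂ := (x 8 : ℂ) + Complex.I * (x 9 : ℂ)

/-- `κ(x)`, the highest weight function of weight `(1,0)`. -/
noncomputable def kappaF (x : Fin 10 → ℝ) : ℂ :=
  ((√2 * x 4 * x 6 - √2 * x 4 * x 8 + √2 * x 5 * x 7 - √2 * x 5 * x 9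
      - 2 * x 1 * x 3 : ℝ) : ℂ)
    + Complex.I * ((-(√2) * x 4 * x 7 - √2 * x 4 * x 9 + √2 * x 5 * x 6
      + √2 * x 5 * x 8 + 2 * x 1 * x 2 : ℝ) : ℂ)

/-- `σ(x)`, the highest weight function of weight `(2,0)`. -/
noncomputable def sigmaF (x : Fin 10 → ℝ) : ℂ :=
  ((-(x 2 ^ 2) + x 3 ^ 2 - 2 * x 6 * x 8 - 2 * x 7 * x 9 : ℝ) : ℂ)
    + Complex.I * ((-2 * x 2 * x 3 - 2 * x 6 * x 9 + 2 * x 7 * x 8 : ℝ) : ℂ)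

/-- `ν(x) = (1/4)(∂F/∂x₉ + i ∂F/∂x₁₀)`. -/
noncomputable def nuF (x : Fin 10 → ℝ) : ℂ :=
  (1 / 4 : ℂ) * ((pdF 8 x : ℂ) + Complex.I * (pdF 9 x : ℂ))

/-- `ρ(x) = (1/4)(x₉ + i x₁₀)(∂F/∂x₃ + i ∂F/∂x₄)
- (1/4)(∂F/∂x₉ + i ∂F/∂x₁₀)(x₃ + i x₄)`. -/
noncomputable def rhoF (x : Fin 10 → ℝ) : ℂ :=
  (1 / 4 : ℂ) * ((x 8 : ℂ) + Complex.I * (x 9 : ℂ))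
      * ((pdF 2 x : ℂ) + Complex.I * (pdF 3 x : ℂ))
    - (1 / 4 : ℂ) * ((pdF 8 x : ℂ) + Complex.I * (pdF 9 x : ℂ))
      * ((x 2 : ℂ) + Complex.I * (x 3 : ℂ))


/-- The SO(5)-invariant minimal isoparametric hypersurface
`M = {x ∈ ℝ¹⁰ : |x|² = 1, F(x) = 0}` as a set. -/
noncomputable def MSet : Set (Fin 10 → ℝ) :=
  {x | (∑ i, x i ^ 2) = 1 ∧ FCM x = 0}

/-- The family `𝒰 ∪ 𝒱` of functions `M → ℂ`: for the left summand `(i,j)`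
(with `0 ≤ i ≤ ⌊k/2⌋`, `0 ≤ j ≤ ℓ`) the function `κ^{k-2i} σ^i ζ^{ℓ-j} ν^j`,
and for the right summand `(i,j)` (with `0 ≤ i ≤ ⌊(k-1)/2⌋`, `0 ≤ j ≤ ℓ-1`;
an empty index type when `k = 0` or `ℓ = 0`) the function
`ρ κ^{k-1-2i} σ^i ζ^{ℓ-1-j} ν^j`. -/
noncomputable def famUV (k l : ℕ) :
    (Fin (k / 2 + 1) × Fin (l + 1)) ⊕ (Fin ((k + 1) / 2) × Fin l) →
      (MSet → ℂ) :=
  fun idx =>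
    match idx with
    | .inl (i, j) => fun x =>
        kappaF x.1 ^ (k - 2 * (i : ℕ)) * sigmaF x.1 ^ (i : ℕ)
          * zetaF x.1 ^ (l - (j : ℕ)) * nuF x.1 ^ (j : ℕ)
    | .inr (i, j) => fun x =>
        rhoF x.1 * kappaF x.1 ^ (k - 1 - 2 * (i : ℕ)) * sigmaF x.1 ^ (i : ℕ)
          * zetaF x.1 ^ (l - 1 - (j : ℕ)) * nuF x.1 ^ (j : ℕ)

/-! ### The functions on a linear slice of `ℝ¹⁰` -/

/-- The point `(a, b, c, h, 0, 0, 0, 0, e, m)`. The family of interest has `h = m = 0`; these two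
slots are kept for the partial derivatives in their directions. -/
def slicePt (a b c h e m : ℝ) : Fin 10 → ℝ := ![a, b, c, h, 0, 0, 0, 0, e, m]

lemma FCM_slicePt (a b c h e m : ℝ) :
    FCM (slicePt a b c h e m) =
      2 * ((2 * a * b + e ^ 2 + m ^ 2) ^ 2 + 4 * b ^ 2 * (c ^ 2 + h ^ 2)
          + 2 * (c ^ 2 + h ^ 2) * (e ^ 2 + m ^ 2))
        - (a ^ 2 + b ^ 2 + c ^ 2 + h ^ 2 + e ^ 2 + m ^ 2) ^ 2 := by
  have h2 : √2 ^ 2 = (2 : ℝ) := Real.sq_sqrt (by norm_num)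
  simp [FCM, qMap, slicePt, Fin.sum_univ_succ]
  linear_combination (2 * (c ^ 2 + h ^ 2) * (e ^ 2 + m ^ 2)) * h2

lemma differentiable_FCM : Differentiable ℝ FCM := by
  unfold FCM qMap
  simp only [Fin.sum_univ_succ, Fin.sum_univ_zero]
  simp
  fun_prop

/-- Partial derivatives of `F` as derivatives along coordinate lines. -/
lemma pdF_eq (j : Fin 10) (x : Fin 10 → ℝ) (g : ℝ → ℝ) (g' : ℝ)
    (hg : ∀ t : ℝ, FCM (x + t • Pi.single j 1) = g t) (hd : HasDerivAt g g' 0) :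
    pdF j x = g' := by
  rw [pdF, ← (differentiable_FCM x).lineDeriv_eq_fderiv, lineDeriv]
  simp only [hg]
  exact hd.deriv

lemma hasDerivAt_quartic (p q r s : ℝ) (g : ℝ → ℝ) (n : ℝ)
    (hg : ∀ t, g t = n + p * t + q * t ^ 2 + r * t ^ 3 + s * t ^ 4) : HasDerivAt g p 0 := by
  have : g = fun t => n + p * t + q * t ^ 2 + r * t ^ 3 + s * t ^ 4 := funext hg
  rw [this]
  have h1 := (hasDerivAt_id (0 : ℝ)).const_mul p
  have h2 := (hasDerivAt_pow 2 (0 : ℝ)).const_mul q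
  have h3 := (hasDerivAt_pow 3 (0 : ℝ)).const_mul r
  have h4 := (hasDerivAt_pow 4 (0 : ℝ)).const_mul s
  exact ((((h1.const_add n).add h2).add h3).add h4).congr_deriv (by simp)

lemma pdF_two (a b c e : ℝ) :
    pdF 2 (slicePt a b c 0 e 0) =
      4 * (4 * b ^ 2 * c + 2 * c * e ^ 2 - c * (a ^ 2 + b ^ 2 + c ^ 2 + e ^ 2)) := by
  refine pdF_eq 2 _ (fun t => FCM (slicePt a b (c + t) 0 e 0)) _ (fun t => ?_) ?_
  · congr 1
    ext i
    fin_cases i <;> simp [slicePt]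
  · refine hasDerivAt_quartic _
      (8 * b ^ 2 + 4 * e ^ 2 - 4 * c ^ 2 - 2 * (a ^ 2 + b ^ 2 + c ^ 2 + e ^ 2)) (-4 * c) (-1) _
      (FCM (slicePt a b c 0 e 0)) (fun t => ?_)
    simp only [FCM_slicePt]
    ring

lemma pdF_three (a b c e : ℝ) : pdF 3 (slicePt a b c 0 e 0) = 0 := by
  refine pdF_eq 3 _ (fun t => FCM (slicePt a b c t e 0)) _ (fun t => ?_) ?_
  · congr 1
    ext i
    fin_cases i <;> simp [slicePt]
  · refine hasDerivAt_quartic _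
      (8 * b ^ 2 + 4 * e ^ 2 - 2 * (a ^ 2 + b ^ 2 + c ^ 2 + e ^ 2)) 0 (-1) _
      (FCM (slicePt a b c 0 e 0)) (fun t => ?_)
    simp only [FCM_slicePt]
    ring

lemma pdF_eight (a b c e : ℝ) :
    pdF 8 (slicePt a b c 0 e 0) =
      4 * (e * (2 * (2 * a * b + e ^ 2) + 2 * c ^ 2 - (a ^ 2 + b ^ 2 + c ^ 2 + e ^ 2))) := by
  refine pdF_eq 8 _ (fun t => FCM (slicePt a b c 0 (e + t) 0)) _ (fun t => ?_) ?_
  · congr 1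
    ext i
    fin_cases i <;> simp [slicePt]
  · refine hasDerivAt_quartic _
      (4 * (2 * a * b + e ^ 2) + 8 * e ^ 2 + 4 * c ^ 2 - 4 * e ^ 2
        - 2 * (a ^ 2 + b ^ 2 + c ^ 2 + e ^ 2)) (4 * e) 1 _
      (FCM (slicePt a b c 0 e 0)) (fun t => ?_)
    simp only [FCM_slicePt]
    ring

lemma pdF_nine (a b c e : ℝ) : pdF 9 (slicePt a b c 0 e 0) = 0 := by
  refine pdF_eq 9 _ (fun t => FCM (slicePt a b c 0 e t)) _ (fun t => ?_) ?_
  · congr 1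
    ext i
    fin_cases i <;> simp [slicePt]
  · refine hasDerivAt_quartic _
      (4 * (2 * a * b + e ^ 2) + 4 * c ^ 2 - 2 * (a ^ 2 + b ^ 2 + c ^ 2 + e ^ 2)) 0 1 _
      (FCM (slicePt a b c 0 e 0)) (fun t => ?_)
    simp only [FCM_slicePt]
    ring

lemma zetaF_slicePt (a b c e : ℝ) : zetaF (slicePt a b c 0 e 0) = e := by
  simp [zetaF, slicePt]

lemma kappaF_slicePt (a b c e : ℝ) :
    kappaF (slicePt a b c 0 e 0) = Complex.I * (2 * b * c) := by
  simp [kappaF, slicePt]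

lemma sigmaF_slicePt (a b c e : ℝ) : sigmaF (slicePt a b c 0 e 0) = -(c : ℂ) ^ 2 := by
  simp [sigmaF, slicePt]

lemma nuF_slicePt (a b c e : ℝ) :
    nuF (slicePt a b c 0 e 0) =
      e * (2 * (2 * a * b + e ^ 2) + 2 * c ^ 2 - (a ^ 2 + b ^ 2 + c ^ 2 + e ^ 2)) := by
  rw [nuF, pdF_eight, pdF_nine]
  push_cast
  ring

lemma rhoF_slicePt (a b c e : ℝ) :
    rhoF (slicePt a b c 0 e 0) = e * c * (4 * b ^ 2 - 4 * a * b - 2 * c ^ 2) := by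
  rw [rhoF, pdF_eight, pdF_nine, pdF_two, pdF_three]
  simp [slicePt]
  ring

lemma mem_MSet_slicePt (a b c e : ℝ) (hN : a ^ 2 + b ^ 2 + c ^ 2 + e ^ 2 = 1)
    (hF : 2 * ((2 * a * b + e ^ 2) ^ 2 + 4 * b ^ 2 * c ^ 2 + 2 * c ^ 2 * e ^ 2) = 1) :
    slicePt a b c 0 e 0 ∈ MSet := by
  refine ⟨?_, ?_⟩
  · simp [slicePt, Fin.sum_univ_succ]
    linarith
  · rw [FCM_slicePt]
    have h : (a ^ 2 + b ^ 2 + c ^ 2 + 0 ^ 2 + e ^ 2 + 0 ^ 2) = 1 := by linarith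
    rw [h]
    linarith

/-- A two-parameter family of points of `M`, together with their antipodes, on which
`σ / κ² = 1 / (4 b²)` and `ν / ζ = 1 - 2 d²`. -/
lemma exists_point (b d : ℝ) (hb : b ∈ Set.Ioo (0 : ℝ) (1 / 10))
    (hd : d ∈ Set.Ioo (0 : ℝ) (1 / 10)) :
    ∃ (x y : MSet) (K Z R : ℂ), K ≠ 0 ∧ Z ≠ 0 ∧ R ≠ 0 ∧
      (kappaF x = K ∧ sigmaF x = K ^ 2 * ((1 / (4 * b ^ 2) : ℝ) : ℂ) ∧ zetaF x = Z ∧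
        nuF x = Z * ((1 - 2 * d ^ 2 : ℝ) : ℂ) ∧ rhoF x = R) ∧
      (kappaF y = K ∧ sigmaF y = K ^ 2 * ((1 / (4 * b ^ 2) : ℝ) : ℂ) ∧ zetaF y = -Z ∧
        nuF y = -Z * ((1 - 2 * d ^ 2 : ℝ) : ℂ) ∧ rhoF y = R) := by
  obtain ⟨hb0, hb1⟩ := hb
  obtain ⟨hd0, hd1⟩ := hd
  have hbd : 0 < b * d := mul_pos hb0 hd0
  have hb2 : b ^ 2 < 1 / 100 := by nlinarith
  have hd2 : d ^ 2 < 1 / 100 := by nlinarith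
  -- `w` is the square root of the reduced discriminant, `c ^ 2` the positive root.
  obtain ⟨w, hw0, hw⟩ : ∃ w : ℝ, 0 ≤ w ∧ w ^ 2 = (2 * b * d) ^ 2 + ((1 - d ^ 2) ^ 2 - 1 / 2) :=
    ⟨√((2 * b * d) ^ 2 + ((1 - d ^ 2) ^ 2 - 1 / 2)), Real.sqrt_nonneg _,
      Real.sq_sqrt (by nlinarith [sq_nonneg (2 * b * d)])⟩
  have hw1 : 2 * b * d < w := by
    refine lt_of_pow_lt_pow_left₀ 2 hw0 ?_
    nlinarith
  have hw2 : w < 8 / 10 := by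
    refine lt_of_pow_lt_pow_left₀ 2 (by norm_num) ?_
    have : (2 * b * d) ^ 2 ≤ 4 * (1 / 100) * d ^ 2 := by
      nlinarith [mul_nonneg (sq_nonneg d) (sub_nonneg.2 hb2.le)]
    nlinarith [sq_nonneg d]
  obtain ⟨c, hc0, hc⟩ : ∃ c : ℝ, 0 < c ∧ c ^ 2 = w - 2 * b * d :=
    ⟨√(w - 2 * b * d), Real.sqrt_pos.2 (by linarith), Real.sq_sqrt (by linarith)⟩
  have hpos : 0 < 1 - (b + d) ^ 2 - b ^ 2 - c ^ 2 := by
    rw [hc]; nlinarith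
  obtain ⟨e, he0, he⟩ : ∃ e : ℝ, 0 < e ∧ e ^ 2 = 1 - (b + d) ^ 2 - b ^ 2 - c ^ 2 :=
    ⟨√(1 - (b + d) ^ 2 - b ^ 2 - c ^ 2), Real.sqrt_pos.2 hpos, Real.sq_sqrt hpos.le⟩
  have hquad : (c ^ 2) ^ 2 + 4 * b * d * c ^ 2 = (1 - d ^ 2) ^ 2 - 1 / 2 := by
    rw [hc]; linear_combination hw
  have hF : 2 * ((2 * (b + d) * b + e ^ 2) ^ 2 + 4 * b ^ 2 * c ^ 2 + 2 * c ^ 2 * e ^ 2) = 1 := by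
    rw [he]; linear_combination -2 * hquad
  have heC : (e : ℂ) ^ 2 = 1 - (b + d) ^ 2 - b ^ 2 - c ^ 2 := by exact_mod_cast he
  have hbC : (b : ℂ) ≠ 0 := by exact_mod_cast hb0.ne'
  have hcC : (c : ℂ) ≠ 0 := by exact_mod_cast hc0.ne'
  have heC0 : (e : ℂ) ≠ 0 := by exact_mod_cast he0.ne'
  have hR : ((4 * b ^ 2 - 4 * (b + d) * b - 2 * c ^ 2 : ℝ) : ℂ) ≠ 0 := by
    have : (4 * b ^ 2 - 4 * (b + d) * b - 2 * c ^ 2 : ℝ) < 0 := by nlinarith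
    exact_mod_cast this.ne
  refine ⟨⟨slicePt (b + d) b c 0 e 0, mem_MSet_slicePt _ _ _ _ (by linarith) hF⟩,
    ⟨slicePt (-(b + d)) (-b) (-c) 0 (-e) 0, mem_MSet_slicePt _ _ _ _ (by
      linear_combination he) (by linear_combination hF)⟩,
    Complex.I * (2 * b * c), e,
    e * c * ((4 * b ^ 2 - 4 * (b + d) * b - 2 * c ^ 2 : ℝ) : ℂ), ?_, heC0, ?_,
    ⟨?_, ?_, ?_, ?_, ?_⟩, ⟨?_, ?_, ?_, ?_, ?_⟩⟩
  · simp [hbC, hcC]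
  · exact mul_ne_zero (mul_ne_zero heC0 hcC) hR
  · exact kappaF_slicePt _ _ _ _
  · rw [sigmaF_slicePt, mul_pow, Complex.I_sq]
    push_cast
    field_simp
    ring
  · exact zetaF_slicePt _ _ _ _
  · rw [nuF_slicePt]
    push_cast
    linear_combination (e : ℂ) * heC
  · rw [rhoF_slicePt]
    push_cast
    ring
  · rw [kappaF_slicePt]
    push_cast
    ring
  · rw [sigmaF_slicePt, mul_pow, Complex.I_sq]
    push_cast
    field_simp
    ring
  · rw [zetaF_slicePt]
    push_cast
    ring
  · rw [nuF_slicePt]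
    push_cast
    linear_combination -(e : ℂ) * heC
  · rw [rhoF_slicePt]
    push_cast
    ring

/-! ### Polynomials vanishing on infinite sets -/

lemma coeff_eq_zero₁ {n : ℕ} (c : Fin n → ℂ) (D : Set ℝ) (hD : D.Infinite) (φ : ℝ → ℂ)
    (hφ : Set.InjOn φ D) (h : ∀ d ∈ D, ∑ j, c j * φ d ^ (j : ℕ) = 0) : ∀ j, c j = 0 := by
  have hp : (∑ j, Polynomial.C (c j) * Polynomial.X ^ (j : ℕ) : Polynomial ℂ) = 0 := by
    refine Polynomial.eq_zero_of_infinite_isRoot _ ((hD.image hφ).mono ?_)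
    rintro _ ⟨d, hd, rfl⟩
    simp [Polynomial.IsRoot, Polynomial.eval_finsetSum, h d hd]
  intro j
  have := congrArg (fun p => Polynomial.coeff p (j : ℕ)) hp
  simpa [Polynomial.finsetSum_coeff, Polynomial.coeff_C_mul, Polynomial.coeff_X_pow,
    Fin.val_inj] using this

/-- A polynomial in two variables vanishing on a product of two infinite sets is zero. -/
lemma coeff_eq_zero₂ {m n : ℕ} (c : Fin m → Fin n → ℂ) (D : Set ℝ) (hD : D.Infinite)
    (ψ φ : ℝ → ℂ) (hψ : Set.InjOn ψ D) (hφ : Set.InjOn φ D)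
    (h : ∀ b ∈ D, ∀ d ∈ D, ∑ i, ∑ j, c i j * ψ b ^ (i : ℕ) * φ d ^ (j : ℕ) = 0) :
    ∀ i j, c i j = 0 := by
  intro i j
  refine coeff_eq_zero₁ (fun i => c i j) D hD ψ hψ (fun b hb => ?_) i
  refine coeff_eq_zero₁ (fun j => ∑ i, c i j * ψ b ^ (i : ℕ)) D hD φ hφ (fun d hd => ?_) j
  rw [← h b hb d hd, Finset.sum_comm]
  simp [Finset.sum_mul]

/-! ### Linear combinations of the family -/

/-- At a point where `σ = κ² s` and `ν = ζ t`, a linear combination of the family splits into two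
polynomials in `s` and `t` with monomial prefactors. -/
lemma sum_famUV (k l : ℕ) (g : (Fin (k / 2 + 1) × Fin (l + 1)) ⊕ (Fin ((k + 1) / 2) × Fin l) → ℂ)
    (x : MSet) (K Z R s t : ℂ) (hK : kappaF x = K) (hs : sigmaF x = K ^ 2 * s)
    (hZ : zetaF x = Z) (ht : nuF x = Z * t) (hR : rhoF x = R) :
    ∑ p, g p * famUV k l p x =
      K ^ k * Z ^ l * (∑ i, ∑ j, g (.inl (i, j)) * s ^ (i : ℕ) * t ^ (j : ℕ)) +
      R * K ^ (k - 1) * Z ^ (l - 1) *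
        (∑ i, ∑ j, g (.inr (i, j)) * s ^ (i : ℕ) * t ^ (j : ℕ)) := by
  rw [Fintype.sum_sum_type, Fintype.sum_prod_type, Fintype.sum_prod_type]
  simp only [Finset.mul_sum, famUV, hK, hs, hZ, ht, hR]
  congr 1
  · refine Finset.sum_congr rfl fun i _ => Finset.sum_congr rfl fun j _ => ?_
    have hi : k = (k - 2 * (i : ℕ)) + 2 * i := by omega
    have hj : l = (l - (j : ℕ)) + j := by omega
    have e1 : K ^ k = K ^ (k - 2 * (i : ℕ)) * (K ^ 2) ^ (i : ℕ) := by
      rw [← pow_mul, ← pow_add, ← hi]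
    have e2 : Z ^ l = Z ^ (l - (j : ℕ)) * Z ^ (j : ℕ) := by
      rw [← pow_add, ← hj]
    rw [e1, e2, mul_pow, mul_pow]
    ring
  · refine Finset.sum_congr rfl fun i _ => Finset.sum_congr rfl fun j _ => ?_
    have hi : k - 1 = (k - 1 - 2 * (i : ℕ)) + 2 * i := by omega
    have hj : l - 1 = (l - 1 - (j : ℕ)) + j := by omega
    have e1 : K ^ (k - 1) = K ^ (k - 1 - 2 * (i : ℕ)) * (K ^ 2) ^ (i : ℕ) := by
      rw [← pow_mul, ← pow_add, ← hi]
    have e2 : Z ^ (l - 1) = Z ^ (l - 1 - (j : ℕ)) * Z ^ (j : ℕ) := by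
      rw [← pow_add, ← hj]
    rw [e1, e2, mul_pow, mul_pow]
    ring

/-- A vanishing linear combination gives two vanishing polynomials: comparing the values at a point
and at its antipode separates the two parts by parity in `ζ`. -/
lemma parts_eq_zero (k l : ℕ)
    (g : (Fin (k / 2 + 1) × Fin (l + 1)) ⊕ (Fin ((k + 1) / 2) × Fin l) → ℂ)
    (hg : ∀ x, ∑ p, g p * famUV k l p x = 0) (b d : ℝ) (hb : b ∈ Set.Ioo (0 : ℝ) (1 / 10))
    (hd : d ∈ Set.Ioo (0 : ℝ) (1 / 10)) :
    (∑ i, ∑ j, g (.inl (i, j)) * ((1 / (4 * b ^ 2) : ℝ) : ℂ) ^ (i : ℕ)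
      * ((1 - 2 * d ^ 2 : ℝ) : ℂ) ^ (j : ℕ) = 0) ∧
    (∑ i, ∑ j, g (.inr (i, j)) * ((1 / (4 * b ^ 2) : ℝ) : ℂ) ^ (i : ℕ)
      * ((1 - 2 * d ^ 2 : ℝ) : ℂ) ^ (j : ℕ) = 0) := by
  obtain ⟨x, y, K, Z, R, hK, hZ, hR, ⟨x1, x2, x3, x4, x5⟩, ⟨y1, y2, y3, y4, y5⟩⟩ :=
    exists_point b d hb hd
  have hx := (sum_famUV k l g x K Z R _ _ x1 x2 x3 x4 x5).symm.trans (hg x)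
  have hy := (sum_famUV k l g y K (-Z) R _ _ y1 y2 y3 y4 y5).symm.trans (hg y)
  generalize ((1 / (4 * b ^ 2) : ℝ) : ℂ) = s at *
  generalize ((1 - 2 * d ^ 2 : ℝ) : ℂ) = t at *
  rcases l with _ | l
  · simpa [hK] using hx
  · generalize (∑ i, ∑ j, g (.inl (i, j)) * s ^ (i : ℕ) * t ^ (j : ℕ)) = A at *
    generalize (∑ i, ∑ j, g (.inr (i, j)) * s ^ (i : ℕ) * t ^ (j : ℕ)) = B at *
    rw [Nat.add_sub_cancel] at hx hy
    have hx' : Z ^ l * (K ^ k * Z * A + R * K ^ (k - 1) * B) = 0 := by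
      rw [← hx]; ring
    have hy' : (-Z) ^ l * (-(K ^ k * Z * A) + R * K ^ (k - 1) * B) = 0 := by
      rw [← hy]; ring
    have hx2 := (mul_eq_zero.1 hx').resolve_left (pow_ne_zero _ hZ)
    have hy2 := (mul_eq_zero.1 hy').resolve_left (pow_ne_zero _ (neg_ne_zero.2 hZ))
    have hA : K ^ k * Z * A = 0 := by linear_combination (hx2 - hy2) / 2
    have hB : R * K ^ (k - 1) * B = 0 := by linear_combination (hx2 + hy2) / 2
    exact ⟨(mul_eq_zero.1 hA).resolve_left (mul_ne_zero (pow_ne_zero _ hK) hZ),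
      (mul_eq_zero.1 hB).resolve_left (mul_ne_zero hR (pow_ne_zero _ hK))⟩

lemma linearIndependent_famUV (k l : ℕ) : LinearIndependent ℂ (famUV k l) := by
  rw [Fintype.linearIndependent_iff]
  intro g hg
  have hg' : ∀ x, ∑ p, g p * famUV k l p x = 0 := fun x => by
    simpa using congrFun hg x
  have hD : (Set.Ioo (0 : ℝ) (1 / 10)).Infinite := Set.Ioo_infinite (by norm_num)
  have hψ : Set.InjOn (fun b : ℝ => ((1 / (4 * b ^ 2) : ℝ) : ℂ)) (Set.Ioo (0 : ℝ) (1 / 10)) := by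
    intro u hu v hv huv
    have h1 : 1 / (4 * u ^ 2) = 1 / (4 * v ^ 2) := Complex.ofReal_injective huv
    have h2 : u ^ 2 = v ^ 2 := by
      have := inv_injective (by simpa only [one_div] using h1)
      linarith
    exact (pow_left_inj₀ hu.1.le hv.1.le two_ne_zero).1 h2
  have hφ : Set.InjOn (fun d : ℝ => ((1 - 2 * d ^ 2 : ℝ) : ℂ)) (Set.Ioo (0 : ℝ) (1 / 10)) := by
    intro u hu v hv huv
    have h1 : 1 - 2 * u ^ 2 = 1 - 2 * v ^ 2 := Complex.ofReal_injective huv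
    exact (pow_left_inj₀ hu.1.le hv.1.le two_ne_zero).1 (by linarith)
  rintro (⟨i, j⟩ | ⟨i, j⟩)
  · exact coeff_eq_zero₂ (fun i j => g (.inl (i, j))) _ hD _ _ hψ hφ
      (fun b hb d hd => (parts_eq_zero k l g hg' b d hb hd).1) i j
  · exact coeff_eq_zero₂ (fun i j => g (.inr (i, j))) _ hD _ _ hψ hφ
      (fun b hb d hd => (parts_eq_zero k l g hg' b d hb hd).2) i j

/-- for all `k, ℓ ≥ 0` the family `𝒰 ∪ 𝒱` is linearly
independent over `ℂ` in the space of functions `M → ℂ`, and the dimension of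
its span is `ℓ(k+1) + ⌊k/2⌋ + 1`. -/
theorem stmt14 (k l : ℕ) :
    LinearIndependent ℂ (famUV k l) ∧
    Module.finrank ℂ ↥(Submodule.span ℂ (Set.range (famUV k l)))
      = l * (k + 1) + k / 2 + 1 := by
  refine ⟨linearIndependent_famUV k l, ?_⟩
  rw [finrank_span_eq_card (linearIndependent_famUV k l)]
  simp only [Fintype.card_sum, Fintype.card_prod, Fintype.card_fin]
  have h : (k + 1) / 2 + k / 2 = k := by omega
  calc (k / 2 + 1) * (l + 1) + (k + 1) / 2 * l
      = l * (((k + 1) / 2 + k / 2) + 1) + k / 2 + 1 := by ring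
    _ = l * (k + 1) + k / 2 + 1 := by rw [h]
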